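/- Let F/E be a finite extension of fields and L/E a field extension, and set R = F ⊗_E L. Then the sum over all primes 𝔭 of R of e_𝔭 · [R/𝔭 : L] equals [F : E], where e_𝔭 is the length of the localized ring R_(𝔭). -/

import Mathlib

/-! The ring `R = F ⊗_E L` is an `L`-algebra of dimension `[F : E]`, hence Artinian, so it is the
product of its finitely many localizations `R_𝔭` and `[F : E] = ∑ [R_𝔭 : L]`
(`IsArtinianRing.finrank_eq_sum_primeSpectrum`). A composition series of `R_𝔭` over itself has all
its factors isomorphic to the residue field, so `[R_𝔭 : L]` is the length of `R_𝔭` times the degree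
of its residue field (`IsLocalRing.length_restrictScalars`), and this residue field is `R/𝔭`
because `𝔭` is maximal. -/

open TensorProduct

attribute [local instance] Algebra.TensorProduct.rightAlgebra

/-- The length of a module `M` over a ring `R`: the supremum of the lengths of
chains of submodules below `⊤`, i.e. the height of `⊤` in the lattice of
submodules of `M`. -/
noncomputable def moduleLength (R M : Type*) [Ring R] [AddCommGroup M] [Module R M] : ℕ∞ :=
  Order.height (⊤ : Submodule R M)

/-- The local contribution: `e_𝔭 · [R/𝔭 : L] = [R_𝔭 : L]` for a finite algebra `R` over a field. -/
theorem length_mul_finrank_quotient (L R : Type*) [Field L] [CommRing R] [Algebra L R]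
    [Module.Finite L R] (p : Ideal R) [p.IsPrime] :
    moduleLength (Localization.AtPrime p) (Localization.AtPrime p) *
        (Module.finrank L (R ⧸ p) : ℕ∞) =
      (Module.finrank L (Localization.AtPrime p) : ℕ∞) := by
  have : IsArtinianRing R := IsArtinianRing.of_finite L R
  have : p.IsMaximal := inferInstance
  have : Module.Finite L (Localization.AtPrime p) :=
    Module.Finite.of_surjective
      (IsScalarTower.toAlgHom L R (Localization.AtPrime p)).toLinearMap
      (IsArtinianRing.localization_surjective p.primeCompl _)
  -- Localization at the maximal ideal `p` does not change the residue ring.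
  let e : (R ⧸ p) ≃ₗ[L] p.ResidueField :=
    (AlgEquiv.ofBijective (IsScalarTower.toAlgHom L (R ⧸ p) p.ResidueField)
      p.bijective_algebraMap_quotient_residueField).toLinearEquiv
  rw [moduleLength, ← Module.length_eq_height, ← Module.length_eq_finrank L (R ⧸ p),
    ← Module.length_eq_finrank L (Localization.AtPrime p),
    IsLocalRing.length_restrictScalars L (Localization.AtPrime p) (Localization.AtPrime p), e.length_eq,
    Module.length_eq_of_surjective (R := IsLocalRing.ResidueField L) (S := L)
      (IsLocalRing.residue_surjective (R := L))]


/-- Let `F/E` be a finite extension of fields and `L/E` a field extension, and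
set `R = F ⊗_E L`. Then the sum over all primes `𝔭` of `R` of
`e_𝔭 · [R/𝔭 : L]` equals `[F : E]`, where `e_𝔭` is the length of the localized
ring `R_(𝔭)` and `[R/𝔭 : L]` is the degree of the residue field over `L`. -/
theorem sum_length_mul_degree
    (E F L : Type*) [Field E] [Field F] [Field L]
    [Algebra E F] [Algebra E L] [FiniteDimensional E F] :
    ∑ᶠ p : PrimeSpectrum (F ⊗[E] L),
        moduleLength (Localization.AtPrime p.asIdeal) (Localization.AtPrime p.asIdeal) *
          (Module.finrank L ((F ⊗[E] L) ⧸ p.asIdeal) : ℕ∞)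
      = (Module.finrank E F : ℕ∞) := by
  have : Module.Finite L (F ⊗[E] L) :=
    Module.Finite.equiv (Algebra.TensorProduct.commRight E L F).toLinearEquiv
  have : IsArtinianRing (F ⊗[E] L) := IsArtinianRing.of_finite L (F ⊗[E] L)
  have := Fintype.ofFinite (PrimeSpectrum (F ⊗[E] L))
  have hrank : Module.finrank L (F ⊗[E] L) = Module.finrank E F :=
    (Algebra.TensorProduct.commRight E L F).toLinearEquiv.finrank_eq.symm.trans
      Module.finrank_baseChange
  rw [finsum_eq_sum_of_fintype, ← hrank,
    IsArtinianRing.finrank_eq_sum_primeSpectrum (F ⊗[E] L) L, Nat.cast_sum]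
  exact Finset.sum_congr rfl fun p _ ↦ length_mul_finrank_quotient L (F ⊗[E] L) p.asIdeal
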